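/- arXiv:2307.07038 — 2 statements merged into one kernel-verified Lean document; each statement's English description precedes it below -/
import Mathlib

section
/- Assume the growth conditions (GC) and let f be a measurable selector. Then for all Borel measurable u, v : X → ℝ with ‖u‖_W < ∞ and ‖v‖_W < ∞ one has ‖T_f u − T_f v‖_W ≤ γ·‖u − v‖_W, and there exists a unique Borel measurable function V_f : X → ℝ with ‖V_f‖_W < ∞ satisfying V_f(x) = C(x,f(x)) + α ∫_X V_f(y) Q(dy|x,f(x)) for all x ∈ X; moreover ‖V_f‖_W ≤ M/(1−γ). -/
open MeasureTheory ProbabilityTheory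
open scoped ENNReal

/-- The weighted norm `‖u‖_W = sup_x |u x| / W x`, valued in `ℝ≥0∞`. -/
noncomputable def WNorm {X : Type*} (W u : X → ℝ) : ℝ≥0∞ :=
  ⨆ x, ENNReal.ofReal (|u x| / W x)

/-- The dynamic programming (Bellman) operator
`Tu(x) = inf_{a ∈ A(x)} [C(x,a) + α ∫ u dQ(·|x,a)]`. -/
noncomputable def Tbell {X A : Type*} [MeasurableSpace X] [MeasurableSpace A]
    (Adm : X → Set A) (Q : Kernel (X × A) X) (C : X × A → ℝ) (α : ℝ)
    (u : X → ℝ) (x : X) : ℝ :=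
  sInf ((fun a => C (x, a) + α * ∫ y, u y ∂(Q (x, a))) '' Adm x)

/-!
Dividing by `W` turns `WNorm W (u - v)` into the uniform distance of `u / W` and `v / W`, so the
measurable functions of finite `W`-norm form a complete space: measurability and boundedness both
survive uniform limits. There `T_f` is an affine map whose linear part `α Q_f` has `W`-norm at most
`α β`, since `|∫ u dQ_f| ≤ ‖u‖_W ∫ W dQ_f ≤ ‖u‖_W β W`. Banach's theorem applies, and its a priori
estimate started at `0` bounds the fixed point by `‖T_f 0‖_W / (1 - α β)`, where `T_f 0 = C_f`.
-/

open Function Set UniformFun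
open scoped NNReal UniformConvergence

section WeightedNorm

variable {X : Type*} {W u v : X → ℝ}

theorem WNorm_le_iff (hW : ∀ x, 0 < W x) {b : ℝ≥0∞} :
    WNorm W u ≤ b ↔ ∀ x, ‖u x‖ₑ ≤ b * ENNReal.ofReal (W x) := by
  refine iSup_le_iff.trans (forall_congr' fun x => ?_)
  rw [ENNReal.ofReal_div_of_pos (hW x), Real.enorm_eq_ofReal_abs,
    ENNReal.div_le_iff (ENNReal.ofReal_pos.2 (hW x)).ne' ENNReal.ofReal_ne_top]

theorem enorm_le_WNorm_mul (hW : ∀ x, 0 < W x) (u : X → ℝ) (x : X) :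
    ‖u x‖ₑ ≤ WNorm W u * ENNReal.ofReal (W x) :=
  (WNorm_le_iff hW).1 le_rfl x

theorem WNorm_le_ofReal (hW : ∀ x, 0 < W x) {M : ℝ} (hu : ∀ x, |u x| ≤ M * W x) :
    WNorm W u ≤ ENNReal.ofReal M :=
  iSup_le fun x => ENNReal.ofReal_le_ofReal ((div_le_iff₀ (hW x)).2 (hu x))

theorem WNorm_zero : WNorm W 0 = 0 := by
  simp [WNorm]

theorem WNorm_add_le (hW : ∀ x, 0 < W x) : WNorm W (u + v) ≤ WNorm W u + WNorm W v := by
  refine (WNorm_le_iff hW).2 fun x => (enorm_add_le _ _).trans ?_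
  rw [add_mul]
  exact add_le_add (enorm_le_WNorm_mul hW u x) (enorm_le_WNorm_mul hW v x)

theorem WNorm_smul (a : ℝ) : WNorm W (a • u) = ‖a‖ₑ * WNorm W u := by
  simp only [WNorm, Pi.smul_apply, smul_eq_mul, abs_mul, mul_div_assoc,
    ENNReal.ofReal_mul (abs_nonneg a), ENNReal.mul_iSup, Real.enorm_eq_ofReal_abs]

end WeightedNorm

section WeightedSpace

variable {X : Type*} {W : X → ℝ}

/-- The function `u / W`, regarded as a point of the space of functions with the metric of uniform
convergence. -/
noncomputable def divWeight (W u : X → ℝ) : X →ᵤ ℝ :=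
  ofFun (u / W)

theorem edist_divWeight (hW : ∀ x, 0 < W x) (u v : X → ℝ) :
    edist (divWeight W u) (divWeight W v) = WNorm W (u - v) := by
  refine iSup_congr fun x => ?_
  rw [edist_dist, Real.dist_eq]
  change ENNReal.ofReal |u x / W x - v x / W x| = ENNReal.ofReal (|u x - v x| / W x)
  rw [← sub_div, abs_div, abs_of_pos (hW x)]

theorem divWeight_injective (hW : ∀ x, 0 < W x) : Injective (divWeight W) := fun _ _ huv =>
  funext fun x => (div_left_inj' (hW x).ne').1 (congrFun huv x)

variable [MeasurableSpace X]

theorem isClosed_setOf_measurable_toFun {E : Type*} [PseudoEMetricSpace E] [MeasurableSpace E]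
    [BorelSpace E] : IsClosed {g : X →ᵤ E | Measurable (toFun g)} := by
  refine isSeqClosed_iff_isClosed.1 fun g l hg hgl => ?_
  exact measurable_of_tendsto_metrizable hg
    ((UniformFun.uniformContinuous_toFun.continuous.tendsto l).comp hgl)

/-- The space of measurable functions of finite `W`-norm, on which the operators `T_f` act. -/
def WeightedSpace (W : X → ℝ) : Type _ :=
  {u : X → ℝ // Measurable u ∧ WNorm W u < ⊤}

/-- The metric `WNorm W (u - v)` on `WeightedSpace W`, pulled back from uniform convergence along
`divWeight W`. -/
noncomputable abbrev weightedEMetricSpace (hW : ∀ x, 0 < W x) : EMetricSpace (WeightedSpace W) :=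
  EMetricSpace.induced (fun u => divWeight W u.1)
    ((divWeight_injective hW).comp Subtype.val_injective) inferInstance

theorem range_divWeight_weightedSpace (hWm : Measurable W) (hW : ∀ x, 0 < W x) :
    range (fun u : WeightedSpace W => divWeight W u.1) =
      {g : X →ᵤ ℝ | Measurable (toFun g)} ∩ Metric.eball (divWeight W 0) ⊤ := by
  ext g
  constructor
  · rintro ⟨u, rfl⟩
    refine ⟨u.2.1.div hWm, ?_⟩
    rw [Metric.mem_eball, edist_divWeight hW, sub_zero]
    exact u.2.2
  · rintro ⟨hg, hg_finite⟩
    have hdiv : divWeight W (toFun g * W) = g :=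
      funext fun x => mul_div_cancel_right₀ (toFun g x) (hW x).ne'
    rw [Metric.mem_eball, ← hdiv, edist_divWeight hW, sub_zero] at hg_finite
    exact ⟨⟨toFun g * W, hg.mul hWm, hg_finite⟩, hdiv⟩

theorem completeSpace_weightedSpace (hWm : Measurable W) (hW : ∀ x, 0 < W x) :
    @CompleteSpace (WeightedSpace W) (weightedEMetricSpace hW).toUniformSpace := by
  let := weightedEMetricSpace hW
  have hind : IsUniformInducing fun u : WeightedSpace W => divWeight W u.1 := ⟨rfl⟩
  rw [completeSpace_iff_isComplete_range hind, range_divWeight_weightedSpace hWm hW]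
  exact (isClosed_setOf_measurable_toFun.inter Metric.isClosed_eball_top).isComplete

theorem exists_fixedPoint_of_WNorm_contraction (hWm : Measurable W) (hW : ∀ x, 0 < W x)
    {T : (X → ℝ) → X → ℝ} {K : ℝ≥0} (hK : K < 1)
    (hT : ∀ u, Measurable u → WNorm W u < ⊤ → Measurable (T u) ∧ WNorm W (T u) < ⊤)
    (hT_contr : ∀ u v, Measurable u → Measurable v → WNorm W u < ⊤ → WNorm W v < ⊤ →
      WNorm W (T u - T v) ≤ K * WNorm W (u - v)) :
    ∃ V, (Measurable V ∧ WNorm W V < ⊤ ∧ V = T V) ∧ WNorm W V ≤ WNorm W (T 0) / (1 - K) ∧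
      ∀ V', Measurable V' ∧ WNorm W V' < ⊤ ∧ V' = T V' → V' = V := by
  let := weightedEMetricSpace hW
  have := completeSpace_weightedSpace hWm hW
  have edist_eq (u v : WeightedSpace W) : edist u v = WNorm W (u.1 - v.1) :=
    edist_divWeight hW u.1 v.1
  let S : WeightedSpace W → WeightedSpace W := fun u => ⟨T u.1, hT u.1 u.2.1 u.2.2⟩
  let zero : WeightedSpace W := ⟨0, measurable_zero, WNorm_zero.trans_lt ENNReal.zero_lt_top⟩
  have edist_zero (u : WeightedSpace W) : edist u zero = WNorm W u.1 := by
    rw [edist_eq, sub_zero]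
  have edist_ne_top (u v : WeightedSpace W) : edist u v ≠ ⊤ := by
    refine ((edist_triangle_right u v zero).trans_lt ?_).ne
    rw [edist_zero, edist_zero]
    exact ENNReal.add_lt_top.2 ⟨u.2.2, v.2.2⟩
  have hS : ContractingWith K S := by
    refine ⟨hK, fun u v => ?_⟩
    rw [edist_eq, edist_eq]
    exact hT_contr u.1 v.1 u.2.1 v.2.1 u.2.2 v.2.2
  obtain ⟨V, hV, -⟩ := hS.exists_fixedPoint zero (edist_ne_top _ _)
  refine ⟨V.1, ⟨V.2.1, V.2.2, congrArg Subtype.val hV.symm⟩, ?_, ?_⟩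
  · have hle := hS.edist_le_of_fixedPoint (edist_ne_top zero V) hV
    rwa [edist_comm, edist_zero, edist_comm, edist_zero] at hle
  · rintro V' ⟨hV'm, hV'_finite, hV'⟩
    have hV'_fixed : IsFixedPt S ⟨V', hV'm, hV'_finite⟩ := Subtype.ext hV'.symm
    exact congrArg Subtype.val
      ((hS.eq_or_edist_eq_top_of_fixedPoints hV'_fixed hV).resolve_right (edist_ne_top _ _))

end WeightedSpace

section Integration

variable {X : Type*} [MeasurableSpace X] {W u : X → ℝ}

theorem integrable_of_WNorm_lt_top {μ : Measure X} (hW : ∀ x, 0 < W x)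
    (hμ : ∫⁻ y, ENNReal.ofReal (W y) ∂μ < ⊤) (hu : Measurable u) (hu_finite : WNorm W u < ⊤) :
    Integrable u μ := by
  refine ⟨hu.aestronglyMeasurable, ?_⟩
  calc ∫⁻ y, ‖u y‖ₑ ∂μ
      ≤ ∫⁻ y, WNorm W u * ENNReal.ofReal (W y) ∂μ := lintegral_mono (enorm_le_WNorm_mul hW u)
    _ = WNorm W u * ∫⁻ y, ENNReal.ofReal (W y) ∂μ := lintegral_const_mul' _ _ hu_finite.ne
    _ < ⊤ := ENNReal.mul_lt_top hu_finite hμ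

theorem WNorm_integral_le {μ : X → Measure X} {b : ℝ≥0∞} (hWm : Measurable W)
    (hW : ∀ x, 0 < W x)
    (hμ : ∀ x, ∫⁻ y, ENNReal.ofReal (W y) ∂μ x ≤ b * ENNReal.ofReal (W x)) (u : X → ℝ) :
    WNorm W (fun x => ∫ y, u y ∂μ x) ≤ b * WNorm W u := by
  refine (WNorm_le_iff hW).2 fun x => ?_
  calc ‖∫ y, u y ∂μ x‖ₑ
      ≤ ∫⁻ y, ‖u y‖ₑ ∂μ x := enorm_integral_le_lintegral_enorm u
    _ ≤ ∫⁻ y, WNorm W u * ENNReal.ofReal (W y) ∂μ x := lintegral_mono (enorm_le_WNorm_mul hW u)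
    _ = WNorm W u * ∫⁻ y, ENNReal.ofReal (W y) ∂μ x := lintegral_const_mul _ hWm.ennreal_ofReal
    _ ≤ WNorm W u * (b * ENNReal.ofReal (W x)) := by gcongr; exact hμ x
    _ = b * WNorm W u * ENNReal.ofReal (W x) := by ring

end Integration

section DiscountedOperator

variable {X : Type*} [MeasurableSpace X] {κ : Kernel X X} {c W u v : X → ℝ} {α : ℝ} {β : ℝ≥0}

/-- The operator `u ↦ c + α κ u`. With `c x = C (x, f x)` and `κ x = Q (x, f x)` this is the paper's
`T_f`. -/
noncomputable def discountedOperator (κ : Kernel X X) (c : X → ℝ) (α : ℝ) (u : X → ℝ) : X → ℝ :=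
  fun x => c x + α * ∫ y, u y ∂κ x

theorem discountedOperator_zero : discountedOperator κ c α 0 = c := by
  funext x
  simp [discountedOperator]

theorem measurable_discountedOperator (hc : Measurable c) (hu : Measurable u) :
    Measurable (discountedOperator κ c α u) :=
  hc.add (hu.stronglyMeasurable.integral_kernel.measurable.const_mul α)

theorem WNorm_discountedOperator_lt_top (hWm : Measurable W) (hW : ∀ x, 0 < W x)
    (hκ : ∀ x, ∫⁻ y, ENNReal.ofReal (W y) ∂κ x ≤ β * ENNReal.ofReal (W x))
    (hc : WNorm W c < ⊤) (hu : WNorm W u < ⊤) : WNorm W (discountedOperator κ c α u) < ⊤ := by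
  have hint : WNorm W (fun x => ∫ y, u y ∂κ x) < ⊤ :=
    (WNorm_integral_le hWm hW hκ u).trans_lt (ENNReal.mul_lt_top ENNReal.coe_lt_top hu)
  calc WNorm W (discountedOperator κ c α u)
      ≤ WNorm W c + WNorm W (α • fun x => ∫ y, u y ∂κ x) := WNorm_add_le hW
    _ = WNorm W c + ‖α‖ₑ * WNorm W (fun x => ∫ y, u y ∂κ x) := by rw [WNorm_smul]
    _ < ⊤ := ENNReal.add_lt_top.2 ⟨hc, ENNReal.mul_lt_top enorm_lt_top hint⟩

theorem discountedOperator_sub (hu : ∀ x, Integrable u (κ x)) (hv : ∀ x, Integrable v (κ x)) :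
    discountedOperator κ c α u - discountedOperator κ c α v =
      α • fun x => ∫ y, (u - v) y ∂κ x := by
  funext x
  simp only [discountedOperator, Pi.sub_apply, Pi.smul_apply, smul_eq_mul,
    integral_sub (hu x) (hv x)]
  ring

theorem WNorm_discountedOperator_sub_le (hWm : Measurable W) (hW : ∀ x, 0 < W x)
    (hκ : ∀ x, ∫⁻ y, ENNReal.ofReal (W y) ∂κ x ≤ β * ENNReal.ofReal (W x))
    (hu : Measurable u) (hv : Measurable v) (hu_finite : WNorm W u < ⊤)
    (hv_finite : WNorm W v < ⊤) :
    WNorm W (discountedOperator κ c α u - discountedOperator κ c α v) ≤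
      ‖α‖ₑ * β * WNorm W (u - v) := by
  have hκ_finite (x : X) : ∫⁻ y, ENNReal.ofReal (W y) ∂κ x < ⊤ :=
    (hκ x).trans_lt (ENNReal.mul_lt_top ENNReal.coe_lt_top ENNReal.ofReal_lt_top)
  rw [discountedOperator_sub (fun x => integrable_of_WNorm_lt_top hW (hκ_finite x) hu hu_finite)
    (fun x => integrable_of_WNorm_lt_top hW (hκ_finite x) hv hv_finite), WNorm_smul, mul_assoc]
  gcongr
  exact WNorm_integral_le hWm hW hκ (u - v)

end DiscountedOperator

theorem Tf_contraction_unique_fixedPoint_general {X : Type*} [MeasurableSpace X]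
    {κ : Kernel X X} {c W : X → ℝ} {α β M : ℝ}
    (hc : Measurable c) (hWm : Measurable W) (hW : ∀ x, 0 < W x) (hβ : 0 ≤ β)
    (hcW : ∀ x, |c x| ≤ M * W x)
    (hκW : ∀ x, ∫⁻ y, ENNReal.ofReal (W y) ∂κ x ≤ ENNReal.ofReal (β * W x))
    (hγ : |α| * β < 1) :
    (∀ u v : X → ℝ, Measurable u → Measurable v → WNorm W u < ⊤ → WNorm W v < ⊤ →
      WNorm W (fun x => (c x + α * ∫ y, u y ∂κ x) - (c x + α * ∫ y, v y ∂κ x)) ≤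
        ENNReal.ofReal (|α| * β) * WNorm W (fun x => u x - v x)) ∧
    ∃ V : X → ℝ,
      (Measurable V ∧ WNorm W V < ⊤ ∧ ∀ x, V x = c x + α * ∫ y, V y ∂κ x) ∧
      WNorm W V ≤ ENNReal.ofReal (M / (1 - |α| * β)) ∧
      ∀ V' : X → ℝ,
        (Measurable V' ∧ WNorm W V' < ⊤ ∧ ∀ x, V' x = c x + α * ∫ y, V' y ∂κ x) → V' = V := by
  have hκ (x : X) :
      ∫⁻ y, ENNReal.ofReal (W y) ∂κ x ≤ β.toNNReal * ENNReal.ofReal (W x) :=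
    (hκW x).trans_eq (ENNReal.ofReal_mul hβ)
  have hmodulus : ENNReal.ofReal (|α| * β) = ‖α‖ₑ * β.toNNReal := by
    rw [ENNReal.ofReal_mul (abs_nonneg α), Real.enorm_eq_ofReal_abs]; rfl
  have hcM : WNorm W c ≤ ENNReal.ofReal M := WNorm_le_ofReal hW hcW
  have hcontr (u v : X → ℝ) (hu : Measurable u) (hv : Measurable v) (hu_finite : WNorm W u < ⊤)
      (hv_finite : WNorm W v < ⊤) :
      WNorm W (discountedOperator κ c α u - discountedOperator κ c α v) ≤
        ENNReal.ofReal (|α| * β) * WNorm W (u - v) :=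
    hmodulus ▸ WNorm_discountedOperator_sub_le hWm hW hκ hu hv hu_finite hv_finite
  refine ⟨hcontr, ?_⟩
  obtain ⟨V, ⟨hVm, hV_finite, hV⟩, hV_le, hV_unique⟩ :=
    exists_fixedPoint_of_WNorm_contraction hWm hW (Real.toNNReal_lt_one.2 hγ)
      (fun u hu hu_finite => ⟨measurable_discountedOperator hc hu,
        WNorm_discountedOperator_lt_top hWm hW hκ (hcM.trans_lt ENNReal.ofReal_lt_top) hu_finite⟩)
      hcontr
  refine ⟨V, ⟨hVm, hV_finite, congrFun hV⟩, ?_, fun V' ⟨hV'm, hV'_finite, hV'⟩ =>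
    hV_unique V' ⟨hV'm, hV'_finite, funext hV'⟩⟩
  calc WNorm W V
      ≤ WNorm W c / (1 - ENNReal.ofReal (|α| * β)) := by
        rwa [discountedOperator_zero] at hV_le
    _ ≤ ENNReal.ofReal M / (1 - ENNReal.ofReal (|α| * β)) := by gcongr
    _ = ENNReal.ofReal (M / (1 - |α| * β)) := by
      rw [ENNReal.ofReal_div_of_pos (sub_pos.2 hγ), ENNReal.ofReal_sub 1 (by positivity),
        ENNReal.ofReal_one]

/-- Under the growth conditions (GC), for every measurable selector `f` the
operator `T_f u = C_f + α Q_f u` is a contraction of modulus `γ = αβ` in the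
`W`-norm on measurable functions of finite `W`-norm, and it has a unique fixed
point `V_f` there; moreover `‖V_f‖_W ≤ M/(1-γ)`. -/
theorem Tf_contraction_unique_fixedPoint {X A : Type*}
    [MetricSpace X] [PolishSpace X] [MeasurableSpace X] [BorelSpace X]
    [MetricSpace A] [PolishSpace A] [MeasurableSpace A] [BorelSpace A]
    (Adm : X → Set A) (hAne : ∀ x, (Adm x).Nonempty)
    (hKmeas : MeasurableSet {p : X × A | p.2 ∈ Adm p.1})
    (Q : Kernel (X × A) X) [IsMarkovKernel Q]
    (C : X × A → ℝ) (hCmeas : Measurable C)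
    (α : ℝ) (hα0 : 0 < α) (hα1 : α < 1)
    (M β : ℝ) (hM : 0 < M) (hβ : 1 < β)
    (W : X → ℝ) (hWmeas : Measurable W) (hW1 : ∀ x, 1 ≤ W x)
    (hCW : ∀ x, ∀ a ∈ Adm x, |C (x, a)| ≤ M * W x)
    (hQW : ∀ x, ∀ a ∈ Adm x,
      ∫⁻ y, ENNReal.ofReal (W y) ∂(Q (x, a)) ≤ ENNReal.ofReal (β * W x))
    (hγ : α * β < 1)
    (f : X → A) (hf : Measurable f) (hfsel : ∀ x, f x ∈ Adm x) :
    (∀ u v : X → ℝ, Measurable u → Measurable v → WNorm W u < ⊤ → WNorm W v < ⊤ →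
      WNorm W (fun x => (C (x, f x) + α * ∫ y, u y ∂(Q (x, f x))) -
          (C (x, f x) + α * ∫ y, v y ∂(Q (x, f x)))) ≤
        ENNReal.ofReal (α * β) * WNorm W (fun x => u x - v x)) ∧
    ∃ Vf : X → ℝ,
      (Measurable Vf ∧ WNorm W Vf < ⊤ ∧
        ∀ x, Vf x = C (x, f x) + α * ∫ y, Vf y ∂(Q (x, f x))) ∧
      WNorm W Vf ≤ ENNReal.ofReal (M / (1 - α * β)) ∧
      ∀ Vf' : X → ℝ,
        (Measurable Vf' ∧ WNorm W Vf' < ⊤ ∧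
          ∀ x, Vf' x = C (x, f x) + α * ∫ y, Vf' y ∂(Q (x, f x))) → Vf' = Vf := by
  have hgraph : Measurable fun x => (x, f x) := measurable_id.prodMk hf
  have h := Tf_contraction_unique_fixedPoint_general (κ := Q.comap _ hgraph) (α := α)
    (hCmeas.comp hgraph) hWmeas (fun x => zero_lt_one.trans_le (hW1 x)) (zero_le_one.trans hβ.le)
    (fun x => hCW x _ (hfsel x)) (fun x => hQW x _ (hfsel x)) (by rwa [abs_of_pos hα0])
  rwa [abs_of_pos hα0] at h
end

section
/- Assume the growth conditions (GC) and the compactness-continuity conditions (CC), and let v* be the unique lower semicontinuous function with ‖v*‖_W < ∞ satisfying v* = T v*. Then: (i) for every measurable selector f, v* ≤ V_f pointwise; (ii) a measurable selector f satisfies V_f = v* if and only if T v* = T_f v* (i.e. v*(x) = C(x,f(x)) + α ∫_X v*(y) Q(dy|x,f(x)) for all x); and (iii) there exists a measurable selector f* with T v* = T_{f*} v*, hence V_{f*} = v*, so v*(x) = min over measurable selectors f of V_f(x) for every x ∈ X. -/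
open MeasureTheory ProbabilityTheory Filter Topology
open scoped ENNReal

/-!
The action value `(x, a) ↦ C (x, a) + α ∫ v* dQ(·|x, a)` is lower semicontinuous on the graph of
admissible pairs: `v* + cW ≥ 0` is an increasing limit of bounded Lipschitz functions, whose
integrals are continuous by weak continuity, and `∫ W dQ` is continuous by assumption. Hence every
`x` has a compact nonempty set of minimizing actions, and upper semicontinuity of the admissible
sets makes its hitting events measurable. A measurable selector is obtained from such a family of
compact sets by successively keeping only the points nearest to the terms of a dense sequence: this
shrinks every set to a single point.

Comparing `v*` with `V_f` is a contraction argument. If `d ≤ c W` and `d x ≤ α ∫ d dQ(·|x, f x)`,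
iterating gives `d ≤ c (αβ)ⁿ W` for all `n`, so `d ≤ 0`.
-/

section Argmin

variable {A : Type*} {s : Set A} {φ : A → ℝ}

/-- The set of minimizers of `φ` over `s`. -/
def argminSet (s : Set A) (φ : A → ℝ) : Set A :=
  {a ∈ s | IsMinOn φ s a}

theorem argminSet_subset : argminSet s φ ⊆ s :=
  Set.sep_subset _ _

variable [TopologicalSpace A]

theorem nonempty_argminSet (hs : IsCompact s) (hne : s.Nonempty)
    (hφ : LowerSemicontinuousOn φ s) : (argminSet s φ).Nonempty :=
  hφ.exists_isMinOn hne hs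

theorem isCompact_argminSet (hs : IsCompact s) (hφ : LowerSemicontinuousOn φ s) :
    IsCompact (argminSet s φ) := by
  rcases (argminSet s φ).eq_empty_or_nonempty with hempty | ⟨m, hms, hm⟩
  · exact hempty ▸ isCompact_empty
  · have hsublevel : argminSet s φ = s ∩ φ ⁻¹' Set.Iic (φ m) :=
      Set.ext fun a => and_congr_right fun _ =>
        ⟨fun ha => ha hms, fun ha => isMinOn_iff.2 fun b hb => le_trans (Set.mem_Iic.1 ha) (hm hb)⟩
    exact hsublevel ▸ hφ.isCompact_inter_preimage_Iic hs _

theorem argminSet_inter_nonempty_iff (hs : IsCompact s) (hne : s.Nonempty)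
    (hφ : LowerSemicontinuousOn φ s) {B : Set A} (hB : IsClosed B) :
    (argminSet s φ ∩ B).Nonempty ↔
      ∀ q : ℚ, {a ∈ s | φ a ≤ q}.Nonempty → ({a ∈ s | φ a ≤ q} ∩ B).Nonempty := by
  constructor
  · rintro ⟨a, ⟨has, hmin⟩, haB⟩ q ⟨b, hbs, hbq⟩
    exact ⟨a, ⟨has, (hmin hbs).trans hbq⟩, haB⟩
  · intro hsublevel
    obtain ⟨m, hms, hm⟩ := hφ.exists_isMinOn hne hs
    have hit (q : ℚ) (hq : φ m < q) : ∃ a ∈ s ∩ B, φ a ≤ q := by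
      obtain ⟨a, ⟨has, haq⟩, haB⟩ := hsublevel q ⟨m, hms, hq.le⟩
      exact ⟨a, ⟨has, haB⟩, haq⟩
    obtain ⟨q₀, hq₀⟩ := exists_rat_gt (φ m)
    obtain ⟨a₀, ha₀, -⟩ := hit q₀ hq₀
    obtain ⟨b, hb, hbmin⟩ :=
      (hφ.mono Set.inter_subset_left).exists_isMinOn ⟨a₀, ha₀⟩ (hs.inter_right hB)
    have hbm : φ b ≤ φ m := le_of_forall_lt_rat_imp_le fun q hq => by
      obtain ⟨a, ha, haq⟩ := hit q hq
      exact (hbmin ha).trans haq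
    exact ⟨b, ⟨hb.1, fun a ha => hbm.trans (hm ha)⟩, hb.2⟩

end Argmin

section NearestRefinement

variable {A : Type*} [MetricSpace A] {s B : Set A} {d : ℕ → A}

/-- The `n`-th stage of shrinking `s` by keeping, at step `k`, only the points of the current set
that are nearest to `d k`. -/
def nearestRefinement (d : ℕ → A) (s : Set A) : ℕ → Set A
  | 0 => s
  | n + 1 => argminSet (nearestRefinement d s n) fun a => dist a (d n)

theorem lowerSemicontinuousOn_dist_right (c : A) :
    LowerSemicontinuousOn (fun a => dist a c) s :=
  (continuous_id.dist continuous_const).lowerSemicontinuous.lowerSemicontinuousOn s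

theorem isCompact_nearestRefinement (hs : IsCompact s) :
    ∀ n, IsCompact (nearestRefinement d s n)
  | 0 => hs
  | n + 1 => isCompact_argminSet (isCompact_nearestRefinement hs n)
      (lowerSemicontinuousOn_dist_right _)

theorem nonempty_nearestRefinement (hs : IsCompact s) (hne : s.Nonempty) :
    ∀ n, (nearestRefinement d s n).Nonempty
  | 0 => hne
  | n + 1 => nonempty_argminSet (isCompact_nearestRefinement hs n)
      (nonempty_nearestRefinement hs hne n) (lowerSemicontinuousOn_dist_right _)

theorem iInter_nearestRefinement_inter_nonempty_iff (hs : IsCompact s) (hB : IsClosed B) :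
    ((⋂ n, nearestRefinement d s n) ∩ B).Nonempty ↔
      ∀ n, (nearestRefinement d s n ∩ B).Nonempty := by
  rw [Set.iInter_inter]
  refine ⟨fun h n => h.mono (Set.iInter_subset _ n), fun h => ?_⟩
  exact IsCompact.nonempty_iInter_of_sequence_nonempty_isCompact_isClosed _
    (fun _ => Set.inter_subset_inter_left B argminSet_subset) h
    (hs.inter_right hB) fun n => (isCompact_nearestRefinement hs n).isClosed.inter hB

theorem nonempty_iInter_nearestRefinement (hs : IsCompact s) (hne : s.Nonempty) :
    (⋂ n, nearestRefinement d s n).Nonempty := by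
  simpa only [Set.inter_univ, nonempty_nearestRefinement hs hne, forall_const, iff_true] using
    iInter_nearestRefinement_inter_nonempty_iff (d := d) hs isClosed_univ

theorem subsingleton_iInter_nearestRefinement (hd : DenseRange d) :
    (⋂ n, nearestRefinement d s n).Subsingleton := by
  intro a ha b hb
  rw [Set.mem_iInter] at ha hb
  have hdist (n : ℕ) : dist a (d n) = dist b (d n) :=
    le_antisymm ((ha (n + 1)).2 (hb n)) ((hb (n + 1)).2 (ha n))
  have hdist_eq : dist a = dist b :=
    hd.equalizer (continuous_const.dist continuous_id) (continuous_const.dist continuous_id)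
      (funext hdist)
  exact dist_eq_zero.1 ((congrFun hdist_eq b).trans (dist_self b))

end NearestRefinement

section MeasurableSelection

variable {X A : Type*} [MeasurableSpace X]

/-- Measurability of a set-valued map, in the sense that the event of hitting any closed set is
measurable. -/
def MeasurableCorrespondence [TopologicalSpace A] (G : X → Set A) : Prop :=
  ∀ B, IsClosed B → MeasurableSet {x | (G x ∩ B).Nonempty}

theorem measurableCorrespondence_argminSet [TopologicalSpace A] {G : X → Set A} {φ : X → A → ℝ}
    (hGc : ∀ x, IsCompact (G x)) (hGne : ∀ x, (G x).Nonempty)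
    (hφ : ∀ x, LowerSemicontinuousOn (φ x) (G x))
    (hsublevel : ∀ q : ℝ, MeasurableCorrespondence fun x => {a ∈ G x | φ x a ≤ q}) :
    MeasurableCorrespondence fun x => argminSet (G x) (φ x) := by
  intro B hB
  simp only [argminSet_inter_nonempty_iff (hGc _) (hGne _) (hφ _) hB, Set.ofPred_forall]
  refine .iInter fun q => .imp ?_ (hsublevel q B hB)
  simpa only [Set.inter_univ] using hsublevel q Set.univ isClosed_univ

variable [MetricSpace A] {G : X → Set A}

theorem measurableCorrespondence_nearestRefinement (hG : MeasurableCorrespondence G)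
    (hGc : ∀ x, IsCompact (G x)) (hGne : ∀ x, (G x).Nonempty) (d : ℕ → A) :
    ∀ n, MeasurableCorrespondence fun x => nearestRefinement d (G x) n
  | 0 => hG
  | n + 1 => by
    refine measurableCorrespondence_argminSet (fun x => isCompact_nearestRefinement (hGc x) n)
      (fun x => nonempty_nearestRefinement (hGc x) (hGne x) n)
      (fun _ => lowerSemicontinuousOn_dist_right _) fun q B hB => ?_
    have hball := measurableCorrespondence_nearestRefinement hG hGc hGne d n
      (Metric.closedBall (d n) q ∩ B) (Metric.isClosed_closedBall.inter hB)
    simp only [← Set.inter_assoc] at hball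
    exact hball

theorem exists_measurable_selector [TopologicalSpace.SeparableSpace A] [MeasurableSpace A]
    [BorelSpace A] (hG : MeasurableCorrespondence G) (hGc : ∀ x, IsCompact (G x))
    (hGne : ∀ x, (G x).Nonempty) : ∃ f : X → A, Measurable f ∧ ∀ x, f x ∈ G x := by
  rcases isEmpty_or_nonempty X with _ | ⟨⟨x₀⟩⟩
  · exact ⟨isEmptyElim, measurable_of_empty _, isEmptyElim⟩
  have : Nonempty A := (hGne x₀).to_type
  let d := TopologicalSpace.denseSeq A
  choose f hf using fun x => nonempty_iInter_nearestRefinement (d := d) (hGc x) (hGne x)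
  refine ⟨f, measurable_of_isClosed fun B hB => ?_, fun x => Set.mem_iInter.1 (hf x) 0⟩
  have hpreimage : f ⁻¹' B = ⋂ n, {x | (nearestRefinement d (G x) n ∩ B).Nonempty} := by
    ext x
    rw [Set.mem_iInter]
    refine Iff.trans ⟨fun hx => ⟨f x, hf x, hx⟩, ?_⟩
      (iInter_nearestRefinement_inter_nonempty_iff (hGc x) hB)
    rintro ⟨a, ha, haB⟩
    have hfa : f x = a :=
      subsingleton_iInter_nearestRefinement (TopologicalSpace.denseRange_denseSeq A) (hf x) ha
    rwa [Set.mem_preimage, hfa]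
  rw [hpreimage]
  exact .iInter fun n => measurableCorrespondence_nearestRefinement hG hGc hGne d n B hB

end MeasurableSelection

section UpperHemicontinuous

variable {X A : Type*} [TopologicalSpace X] {G : X → Set A}

theorem isClosed_setOf_exists_mem_of_isClosed [TopologicalSpace A] (hG : UpperHemicontinuous G)
    (hGc : ∀ x, IsCompact (G x)) {F : Set (X × A)} (hF : IsClosed F) :
    IsClosed {x | ∃ a ∈ G x, (x, a) ∈ F} := by
  rw [← isOpen_compl_iff, isOpen_iff_mem_nhds]
  intro x hx
  have hdisjoint : {x} ×ˢ G x ⊆ Fᶜ := by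
    rintro ⟨_, a⟩ ⟨rfl, ha⟩ haF
    exact hx ⟨a, ha, haF⟩
  obtain ⟨U, V, hU, hV, hxU, hGV, hUV⟩ :=
    generalized_tube_lemma isCompact_singleton (hGc x) hF.isOpen_compl hdisjoint
  filter_upwards [hU.mem_nhds (hxU rfl), hG.forall_isOpen x V hV hGV] with x' hx'U hx'V
  rintro ⟨a, ha, haF⟩
  exact hUV ⟨hx'U, hx'V ha⟩ haF

theorem measurableCorrespondence_sublevel [TopologicalSpace A] [MeasurableSpace X]
    [OpensMeasurableSpace X] (hG : UpperHemicontinuous G) (hGc : ∀ x, IsCompact (G x))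
    {φ : X × A → ℝ} (hφ : LowerSemicontinuousOn φ {p | p.2 ∈ G p.1}) (q : ℝ) :
    MeasurableCorrespondence fun x => {a ∈ G x | φ (x, a) ≤ q} := by
  intro B hB
  obtain ⟨F, hF, hFφ⟩ := lowerSemicontinuousOn_iff_preimage_Iic.1 hφ q
  have hsublevel (x : X) (a : A) (ha : a ∈ G x) : φ (x, a) ≤ q ↔ (x, a) ∈ F := by
    simpa [ha] using Set.ext_iff.1 hFφ (x, a)
  convert (isClosed_setOf_exists_mem_of_isClosed hG hGc
    (hF.inter (hB.preimage continuous_snd))).measurableSet using 1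
  ext x
  exact exists_congr fun a => and_assoc.trans
    (and_congr_right fun ha => and_congr_left fun _ => hsublevel x a ha)

theorem lowerSemicontinuousOn_section [TopologicalSpace A] {φ : X × A → ℝ}
    (hφ : LowerSemicontinuousOn φ {p | p.2 ∈ G p.1}) (x : X) :
    LowerSemicontinuousOn (fun a => φ (x, a)) (G x) :=
  hφ.comp (Continuous.prodMk_right x).continuousOn fun _ ha => ha

theorem exists_measurable_selector_argminSet [MetricSpace A] [TopologicalSpace.SeparableSpace A]
    [MeasurableSpace A] [BorelSpace A] [MeasurableSpace X] [OpensMeasurableSpace X]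
    (hG : UpperHemicontinuous G) (hGc : ∀ x, IsCompact (G x)) (hGne : ∀ x, (G x).Nonempty)
    {φ : X × A → ℝ} (hφ : LowerSemicontinuousOn φ {p | p.2 ∈ G p.1}) :
    ∃ f : X → A, Measurable f ∧ ∀ x, f x ∈ argminSet (G x) fun a => φ (x, a) := by
  have hφx := lowerSemicontinuousOn_section hφ
  exact exists_measurable_selector
    (measurableCorrespondence_argminSet hGc hGne hφx (measurableCorrespondence_sublevel hG hGc hφ))
    (fun x => isCompact_argminSet (hGc x) (hφx x))
    fun x => nonempty_argminSet (hGc x) (hGne x) (hφx x)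

end UpperHemicontinuous

section LipschitzEnvelope

variable {X : Type*} [PseudoMetricSpace X] {g : X → ℝ} {m : ℝ}

/-- The Pasch–Hausdorff envelope of `g`: its largest `n`-Lipschitz minorant when `g` is bounded
below (otherwise the real infimum may take the value `0` by convention). -/
noncomputable def lipschitzEnvelope (g : X → ℝ) (n : ℕ) (x : X) : ℝ :=
  ⨅ y, (g y + n * dist x y)

theorem le_add_mul_dist (hm : ∀ y, m ≤ g y) (n : ℕ) (x y : X) : m ≤ g y + n * dist x y :=
  le_add_of_le_of_nonneg (hm y) (by positivity)

theorem le_lipschitzEnvelope (hm : ∀ y, m ≤ g y) (n : ℕ) (x : X) : m ≤ lipschitzEnvelope g n x :=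
  have : Nonempty X := ⟨x⟩
  le_ciInf (le_add_mul_dist hm n x)

theorem lipschitzEnvelope_le_add_mul_dist (hm : ∀ y, m ≤ g y) (n : ℕ) (x y : X) :
    lipschitzEnvelope g n x ≤ g y + n * dist x y :=
  ciInf_le ⟨m, Set.forall_mem_range.2 (le_add_mul_dist hm n x)⟩ y

theorem lipschitzEnvelope_le (hm : ∀ y, m ≤ g y) (n : ℕ) (x : X) :
    lipschitzEnvelope g n x ≤ g x := by
  simpa using lipschitzEnvelope_le_add_mul_dist hm n x x

theorem continuous_lipschitzEnvelope (hm : ∀ y, m ≤ g y) (n : ℕ) :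
    Continuous (lipschitzEnvelope g n) := by
  refine (LipschitzWith.of_le_add_mul (n : NNReal) fun x x' => ?_).continuous
  have : Nonempty X := ⟨x⟩
  rw [NNReal.coe_natCast, ← sub_le_iff_le_add]
  refine le_ciInf fun y => sub_le_iff_le_add.2 ?_
  calc lipschitzEnvelope g n x ≤ g y + n * dist x y := lipschitzEnvelope_le_add_mul_dist hm n x y
    _ ≤ g y + n * (dist x x' + dist x' y) := by gcongr; exact dist_triangle x x' y
    _ = g y + n * dist x' y + n * dist x x' := by ring

theorem tendsto_lipschitzEnvelope (hm : ∀ y, m ≤ g y) {x : X} (hg : LowerSemicontinuousAt g x) :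
    Tendsto (fun n => lipschitzEnvelope g n x) atTop (𝓝 (g x)) := by
  have : Nonempty X := ⟨x⟩
  refine tendsto_order.2 ⟨fun c hc => ?_, fun c hc =>
    Eventually.of_forall fun n => (lipschitzEnvelope_le hm n x).trans_lt hc⟩
  obtain ⟨c', hcc', hc'⟩ := exists_between hc
  obtain ⟨δ, hδ, hnear⟩ := Metric.eventually_nhds_iff.1 (hg c' hc')
  filter_upwards [tendsto_natCast_atTop_atTop.eventually_ge_atTop ((c' - m) / δ)] with n hn
  refine hcc'.trans_le (le_ciInf fun y => ?_)
  rcases lt_or_ge (dist x y) δ with hy | hy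
  · exact le_add_of_le_of_nonneg (hnear (dist_comm x y ▸ hy)).le (by positivity)
  · calc c' = m + (c' - m) := by ring
      _ ≤ g y + n * δ := add_le_add (hm y) ((div_le_iff₀ hδ).1 hn)
      _ ≤ g y + n * dist x y := by gcongr

theorem exists_continuous_bounded_tendsto_of_lowerSemicontinuous (hg0 : ∀ x, 0 ≤ g x)
    (hg : LowerSemicontinuous g) :
    ∃ G : ℕ → X → ℝ, (∀ n, Continuous (G n)) ∧ (∀ n x, 0 ≤ G n x) ∧ (∀ n x, G n x ≤ n) ∧
      (∀ n x, G n x ≤ g x) ∧ ∀ x, Tendsto (fun n => G n x) atTop (𝓝 (g x)) := by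
  refine ⟨fun n x => min (lipschitzEnvelope g n x) n,
    fun n => (continuous_lipschitzEnvelope hg0 n).min continuous_const,
    fun n x => le_min (le_lipschitzEnvelope hg0 n x) n.cast_nonneg,
    fun n x => min_le_right _ _,
    fun n x => (min_le_left _ _).trans (lipschitzEnvelope_le hg0 n x), fun x => ?_⟩
  refine (tendsto_lipschitzEnvelope hg0 (hg x)).congr' ?_
  filter_upwards [tendsto_natCast_atTop_atTop.eventually_ge_atTop (g x)] with n hn
  exact (min_eq_left ((lipschitzEnvelope_le hg0 n x).trans hn)).symm

end LipschitzEnvelope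

section WeakContinuity

variable {P X : Type*} [TopologicalSpace P] [PseudoMetricSpace X] [MeasurableSpace X]
  {μ : P → Measure X} {K : Set P} {u w : X → ℝ}

/-- Continuity on `K` of a family of measures for the topology of weak convergence, tested on
bounded continuous functions. The measures need not be finite. -/
def WeaklyContinuousOn (μ : P → Measure X) (K : Set P) : Prop :=
  ∀ g : X → ℝ, Continuous g → (∃ b, ∀ y, |g y| ≤ b) → ContinuousOn (fun p => ∫ y, g y ∂μ p) K

variable [OpensMeasurableSpace X]

theorem lowerSemicontinuousOn_integral_of_nonneg (hμ : WeaklyContinuousOn μ K)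
    (hu0 : ∀ x, 0 ≤ u x) (hu : LowerSemicontinuous u) (hui : ∀ p ∈ K, Integrable u (μ p)) :
    LowerSemicontinuousOn (fun p => ∫ y, u y ∂μ p) K := by
  obtain ⟨G, hGc, hG0, hGn, hGu, hGlim⟩ :=
    exists_continuous_bounded_tendsto_of_lowerSemicontinuous hu0 hu
  have hGmeas (n : ℕ) (p : P) : AEStronglyMeasurable (G n) (μ p) :=
    (hGc n).measurable.aestronglyMeasurable
  have hGnorm (n : ℕ) (p : P) : ∀ᵐ y ∂μ p, ‖G n y‖ ≤ u y :=
    Eventually.of_forall fun y => (Real.norm_of_nonneg (hG0 n y)).trans_le (hGu n y)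
  have hGcont (n : ℕ) : ContinuousOn (fun p => ∫ y, G n y ∂μ p) K :=
    hμ (G n) (hGc n) ⟨n, fun y => (abs_of_nonneg (hG0 n y)).trans_le (hGn n y)⟩
  intro p hp t ht
  have hlim : Tendsto (fun n => ∫ y, G n y ∂μ p) atTop (𝓝 (∫ y, u y ∂μ p)) :=
    tendsto_integral_of_dominated_convergence u (fun n => hGmeas n p) (hui p hp)
      (fun n => hGnorm n p) (Eventually.of_forall hGlim)
  obtain ⟨n, hn⟩ := (hlim.eventually_const_lt ht).exists
  filter_upwards [(hGcont n p hp).eventually_const_lt hn, self_mem_nhdsWithin] with p' hp't hp'K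
  exact hp't.trans_le (integral_mono ((hui p' hp'K).mono' (hGmeas n p') (hGnorm n p'))
    (hui p' hp'K) (hGu n))

theorem lowerSemicontinuousOn_integral_of_continuous_le (hμ : WeaklyContinuousOn μ K)
    (hw : Continuous w) (hwi : ∀ p ∈ K, Integrable w (μ p))
    (hwcont : ContinuousOn (fun p => ∫ y, w y ∂μ p) K) (hwu : ∀ x, w x ≤ u x)
    (hu : LowerSemicontinuous u) (hui : ∀ p ∈ K, Integrable u (μ p)) :
    LowerSemicontinuousOn (fun p => ∫ y, u y ∂μ p) K := by
  have hdiff : LowerSemicontinuousOn (fun p => ∫ y, (u y - w y) ∂μ p) K :=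
    lowerSemicontinuousOn_integral_of_nonneg hμ (fun x => sub_nonneg.2 (hwu x))
      (by simpa only [sub_eq_add_neg, Pi.neg_apply] using hu.add hw.neg.lowerSemicontinuous)
      fun p hp => (hui p hp).sub (hwi p hp)
  have hsum := hdiff.add hwcont.lowerSemicontinuousOn
  intro p hp
  refine LowerSemicontinuousWithinAt.congr_of_eventuallyEq (hsum p hp) hp ?_
  filter_upwards [self_mem_nhdsWithin] with p' hp'
  rw [integral_sub (hui p' hp') (hwi p' hp'), sub_add_cancel]

end WeakContinuity

section WeightedNorm

variable {X : Type*} {W u : X → ℝ}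

theorem abs_le_toReal_WNorm_mul (hW : ∀ x, 0 < W x) (hu : WNorm W u < ⊤) (x : X) :
    |u x| ≤ (WNorm W u).toReal * W x := by
  rw [← div_le_iff₀ (hW x), ← ENNReal.ofReal_le_iff_le_toReal hu.ne]
  exact le_iSup (fun x => ENNReal.ofReal (|u x| / W x)) x

variable [MeasurableSpace X] {ν : Measure X}

theorem integrable_of_WNorm_lt_top_s11 (hW : ∀ x, 0 < W x) (hWi : Integrable W ν)
    (hum : AEStronglyMeasurable u ν) (hu : WNorm W u < ⊤) : Integrable u ν :=
  (hWi.const_mul _).mono' hum (Eventually.of_forall (abs_le_toReal_WNorm_mul hW hu))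

theorem integral_le_of_lintegral_ofReal_le (hW : 0 ≤ᵐ[ν] W) (hWi : Integrable W ν) {b : ℝ}
    (hb : 0 ≤ b) (hle : ∫⁻ y, ENNReal.ofReal (W y) ∂ν ≤ ENNReal.ofReal b) :
    ∫ y, W y ∂ν ≤ b := by
  rwa [← ofReal_integral_eq_lintegral_ofReal hWi hW, ENNReal.ofReal_le_ofReal_iff hb] at hle

end WeightedNorm

section Contraction

variable {X : Type*} [MeasurableSpace X] {W u v r : X → ℝ} {μ : X → Measure X} {α β c : ℝ}

theorem le_mul_pow_mul_of_le_mul_integral (hα : 0 ≤ α) (hβ : 0 ≤ β)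
    (hWi : ∀ x, Integrable W (μ x)) (hWβ : ∀ x, ∫ y, W y ∂μ x ≤ β * W x) (hc : 0 ≤ c)
    (huW : ∀ x, u x ≤ c * W x) (hui : ∀ x, Integrable u (μ x))
    (hu : ∀ x, u x ≤ α * ∫ y, u y ∂μ x) (n : ℕ) (x : X) :
    u x ≤ c * (α * β) ^ n * W x := by
  induction n generalizing x with
  | zero => simpa using huW x
  | succ n ih =>
    calc u x ≤ α * ∫ y, u y ∂μ x := hu x
      _ ≤ α * ∫ y, c * (α * β) ^ n * W y ∂μ x :=
        mul_le_mul_of_nonneg_left (integral_mono (hui x) ((hWi x).const_mul _) ih) hα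
      _ = α * (c * (α * β) ^ n * ∫ y, W y ∂μ x) := by rw [integral_const_mul]
      _ ≤ α * (c * (α * β) ^ n * (β * W x)) := by gcongr; exact hWβ x
      _ = c * (α * β) ^ (n + 1) * W x := by ring

theorem nonpos_of_le_mul_integral (hα : 0 ≤ α) (hβ : 0 ≤ β) (hαβ : α * β < 1)
    (hWi : ∀ x, Integrable W (μ x)) (hWβ : ∀ x, ∫ y, W y ∂μ x ≤ β * W x) (hc : 0 ≤ c)
    (huW : ∀ x, u x ≤ c * W x) (hui : ∀ x, Integrable u (μ x))
    (hu : ∀ x, u x ≤ α * ∫ y, u y ∂μ x) (x : X) : u x ≤ 0 := by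
  have hlim : Tendsto (fun n : ℕ => c * (α * β) ^ n * W x) atTop (𝓝 (c * 0 * W x)) :=
    ((tendsto_pow_atTop_nhds_zero_of_lt_one (by positivity) hαβ).const_mul c).mul_const _
  simpa using ge_of_tendsto' hlim
    fun n => le_mul_pow_mul_of_le_mul_integral hα hβ hWi hWβ hc huW hui hu n x

theorem le_of_subsolution_of_supersolution (hα : 0 ≤ α) (hβ : 0 ≤ β) (hαβ : α * β < 1)
    (hW : ∀ x, 0 < W x) (hWi : ∀ x, Integrable W (μ x)) (hWβ : ∀ x, ∫ y, W y ∂μ x ≤ β * W x)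
    (hum : Measurable u) (huW : WNorm W u < ⊤) (hvm : Measurable v) (hvW : WNorm W v < ⊤)
    (hu : ∀ x, u x ≤ r x + α * ∫ y, u y ∂μ x) (hv : ∀ x, r x + α * ∫ y, v y ∂μ x ≤ v x)
    (x : X) : u x ≤ v x := by
  have hui (x) := integrable_of_WNorm_lt_top_s11 hW (hWi x) hum.aestronglyMeasurable huW
  have hvi (x) := integrable_of_WNorm_lt_top_s11 hW (hWi x) hvm.aestronglyMeasurable hvW
  refine sub_nonpos.1 (nonpos_of_le_mul_integral (u := fun x => u x - v x)
    (c := (WNorm W u).toReal + (WNorm W v).toReal) hα hβ hαβ hWi hWβ (by positivity)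
    (fun x => ?_) (fun x => (hui x).sub (hvi x)) (fun x => ?_) x)
  · linarith [le_of_abs_le (abs_le_toReal_WNorm_mul hW huW x),
      neg_le_of_abs_le (abs_le_toReal_WNorm_mul hW hvW x)]
  · rw [integral_sub (hui x) (hvi x)]
    linarith [hu x, hv x]

end Contraction

section Bellman

variable {X A : Type*} [MeasurableSpace X] [MeasurableSpace A] {Adm : X → Set A}
  {Q : Kernel (X × A) X} {C : X × A → ℝ} {α : ℝ} {u : X → ℝ}

/-- The expected discounted cost `C (x, a) + α ∫ u dQ(·|x, a)` of playing `a` in state `x` when the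
continuation cost is `u`; the quantity minimized by `Tbell`. -/
noncomputable def actionValue (Q : Kernel (X × A) X) (C : X × A → ℝ) (α : ℝ) (u : X → ℝ)
    (p : X × A) : ℝ :=
  C p + α * ∫ y, u y ∂Q p

theorem Tbell_eq_of_mem_argminSet {x : X} {a : A}
    (ha : a ∈ argminSet (Adm x) fun b => actionValue Q C α u (x, b)) :
    Tbell Adm Q C α u x = actionValue Q C α u (x, a) :=
  IsLeast.csInf_eq ⟨Set.mem_image_of_mem _ ha.1, Set.forall_mem_image.2 fun _ hb => ha.2 hb⟩

variable [TopologicalSpace A]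

theorem Tbell_le_actionValue {x : X} (hcompact : IsCompact (Adm x))
    (hlsc : LowerSemicontinuousOn (fun a => actionValue Q C α u (x, a)) (Adm x)) {a : A}
    (ha : a ∈ Adm x) : Tbell Adm Q C α u x ≤ actionValue Q C α u (x, a) :=
  csInf_le (hlsc.bddBelow_of_isCompact hcompact) (Set.mem_image_of_mem _ ha)

theorem lowerSemicontinuousOn_actionValue [PseudoMetricSpace X] [OpensMeasurableSpace X]
    {K : Set (X × A)} {W : X → ℝ} (hα : 0 ≤ α) (hC : LowerSemicontinuousOn C K)
    (hQ : WeaklyContinuousOn Q K) (hW : ∀ x, 0 < W x) (hWcont : Continuous W)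
    (hWi : ∀ p ∈ K, Integrable W (Q p)) (hQW : ContinuousOn (fun p => ∫ y, W y ∂Q p) K)
    (hu : LowerSemicontinuous u) (huW : WNorm W u < ⊤) :
    LowerSemicontinuousOn (actionValue Q C α u) K := by
  let c := (WNorm W u).toReal
  have hintegral : LowerSemicontinuousOn (fun p => ∫ y, u y ∂Q p) K := by
    refine lowerSemicontinuousOn_integral_of_continuous_le (w := fun x => -c * W x) hQ
      (hWcont.const_mul _) (fun p hp => (hWi p hp).const_mul _) ?_ (fun x => ?_) hu
      fun p hp => integrable_of_WNorm_lt_top_s11 hW (hWi p hp) hu.measurable.aestronglyMeasurable huW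
    · simpa only [integral_const_mul] using hQW.const_mul (-c)
    · simpa only [neg_mul] using neg_le_of_abs_le (abs_le_toReal_WNorm_mul hW huW x)
  exact hC.add ((continuous_const_mul α).comp_lowerSemicontinuousOn hintegral
    (monotone_mul_left_of_nonneg hα))

end Bellman

theorem optimal_selector_characterization_general {X A : Type*}
    [PseudoMetricSpace X] [MeasurableSpace X] [OpensMeasurableSpace X]
    [MetricSpace A] [TopologicalSpace.SeparableSpace A] [MeasurableSpace A] [BorelSpace A]
    {Adm : X → Set A} (hAne : ∀ x, (Adm x).Nonempty) {Q : Kernel (X × A) X} {C : X × A → ℝ}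
    {α β : ℝ} (hα : 0 ≤ α) (hβ : 0 ≤ β) (hαβ : α * β < 1) {W : X → ℝ} (hW : ∀ x, 0 < W x)
    (hQWβ : ∀ x, ∀ a ∈ Adm x,
      ∫⁻ y, ENNReal.ofReal (W y) ∂(Q (x, a)) ≤ ENNReal.ofReal (β * W x))
    (hAcomp : ∀ x, IsCompact (Adm x)) (hAuhc : UpperHemicontinuous Adm)
    (hC : LowerSemicontinuousOn C {p | p.2 ∈ Adm p.1})
    (hQ : WeaklyContinuousOn Q {p | p.2 ∈ Adm p.1}) (hWcont : Continuous W)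
    (hQW : ContinuousOn (fun p => ∫ y, W y ∂(Q p)) {p | p.2 ∈ Adm p.1})
    {v : X → ℝ} (hv : LowerSemicontinuous v) (hvW : WNorm W v < ⊤)
    (hvfix : ∀ x, v x = Tbell Adm Q C α v x) :
    (∀ f : X → A, (∀ x, f x ∈ Adm x) → ∀ Vf : X → ℝ, Measurable Vf → WNorm W Vf < ⊤ →
      (∀ x, Vf x = C (x, f x) + α * ∫ y, Vf y ∂(Q (x, f x))) → ∀ x, v x ≤ Vf x) ∧
    (∀ f : X → A, (∀ x, f x ∈ Adm x) → ∀ Vf : X → ℝ, Measurable Vf → WNorm W Vf < ⊤ →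
      (∀ x, Vf x = C (x, f x) + α * ∫ y, Vf y ∂(Q (x, f x))) →
      (Vf = v ↔ ∀ x, v x = C (x, f x) + α * ∫ y, v y ∂(Q (x, f x)))) ∧
    ∃ f : X → A, Measurable f ∧ (∀ x, f x ∈ Adm x) ∧
      ∀ x, v x = C (x, f x) + α * ∫ y, v y ∂(Q (x, f x)) := by
  have hWi (p : X × A) (hp : p.2 ∈ Adm p.1) : Integrable W (Q p) :=
    (lintegral_ofReal_ne_top_iff_integrable hWcont.measurable.aestronglyMeasurable
      (ae_of_all _ fun x => (hW x).le)).1 ((hQWβ p.1 p.2 hp).trans_lt ENNReal.ofReal_lt_top).ne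
  have hWβ (x : X) (a : A) (ha : a ∈ Adm x) : ∫ y, W y ∂Q (x, a) ≤ β * W x :=
    integral_le_of_lintegral_ofReal_le (ae_of_all _ fun x => (hW x).le) (hWi (x, a) ha)
      (mul_nonneg hβ (hW x).le) (hQWβ x a ha)
  have hlsc := lowerSemicontinuousOn_actionValue hα hC hQ hW hWcont hWi hQW hv hvW
  have hvm := hv.measurable
  have hcomparison {f : X → A} (hf : ∀ x, f x ∈ Adm x) {u w : X → ℝ} :=
    le_of_subsolution_of_supersolution (u := u) (v := w) (r := fun x => C (x, f x)) hα hβ hαβ hW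
      (fun x => hWi (x, f x) (hf x)) (fun x => hWβ x (f x) (hf x))
  refine ⟨fun f hf Vf hVm hVW hV => hcomparison hf hvm hvW hVm hVW (fun x => ?_) fun x => (hV x).ge,
    fun f hf Vf hVm hVW hV => ⟨fun h => h ▸ hV, fun hvf => funext fun x => le_antisymm ?_ ?_⟩, ?_⟩
  · exact (hvfix x).trans_le
      (Tbell_le_actionValue (hAcomp x) (lowerSemicontinuousOn_section hlsc x) (hf x))
  · exact hcomparison hf hVm hVW hvm hvW (fun x => (hV x).le) (fun x => (hvf x).ge) x
  · exact hcomparison hf hvm hvW hVm hVW (fun x => (hvf x).le) (fun x => (hV x).ge) x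
  · obtain ⟨f, hfm, hf⟩ := exists_measurable_selector_argminSet hAuhc hAcomp hAne hlsc
    exact ⟨f, hfm, fun x => (hf x).1, fun x => (hvfix x).trans (Tbell_eq_of_mem_argminSet (hf x))⟩

/-- Under (GC) and (CC), with `v*` the lower semicontinuous fixed point of `T` of
finite `W`-norm: (i) `v* ≤ V_f` for every measurable selector `f`; (ii) a
measurable selector `f` satisfies `V_f = v*` iff `T v* = T_f v*`; (iii) there is
a measurable selector `f*` with `T v* = T_{f*} v*` (hence `V_{f*} = v*`, so `v*`
is the minimum of the `V_f` over measurable selectors). -/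
theorem optimal_selector_characterization {X A : Type*}
    [MetricSpace X] [PolishSpace X] [MeasurableSpace X] [BorelSpace X]
    [MetricSpace A] [PolishSpace A] [MeasurableSpace A] [BorelSpace A]
    (Adm : X → Set A) (hAne : ∀ x, (Adm x).Nonempty)
    (hKmeas : MeasurableSet {p : X × A | p.2 ∈ Adm p.1})
    (Q : Kernel (X × A) X) [IsMarkovKernel Q]
    (C : X × A → ℝ) (hCmeas : Measurable C)
    (α : ℝ) (hα0 : 0 < α) (hα1 : α < 1)
    (M β : ℝ) (hM : 0 < M) (hβ : 1 < β)
    (W : X → ℝ) (hWmeas : Measurable W) (hW1 : ∀ x, 1 ≤ W x)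
    (hCW : ∀ x, ∀ a ∈ Adm x, |C (x, a)| ≤ M * W x)
    (hQW : ∀ x, ∀ a ∈ Adm x,
      ∫⁻ y, ENNReal.ofReal (W y) ∂(Q (x, a)) ≤ ENNReal.ofReal (β * W x))
    (hγ : α * β < 1)
    (hAcomp : ∀ x, IsCompact (Adm x))
    (hAusc : ∀ x, ∀ U : Set A, IsOpen U → Adm x ⊆ U → ∀ᶠ x' in 𝓝 x, Adm x' ⊆ U)
    (hClsc : LowerSemicontinuousOn C {p : X × A | p.2 ∈ Adm p.1})
    (hQweak : ∀ g : X → ℝ, Continuous g → (∃ b, ∀ y, |g y| ≤ b) →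
      ContinuousOn (fun p : X × A => ∫ y, g y ∂(Q p)) {p : X × A | p.2 ∈ Adm p.1})
    (hWcont : Continuous W)
    (hQWcont : ContinuousOn (fun p : X × A => ∫ y, W y ∂(Q p))
      {p : X × A | p.2 ∈ Adm p.1})
    (vstar : X → ℝ) (hvstarlsc : LowerSemicontinuous vstar)
    (hvstarW : WNorm W vstar < ⊤)
    (hvstarfix : ∀ x, vstar x = Tbell Adm Q C α vstar x) :
    (∀ f : X → A, Measurable f → (∀ x, f x ∈ Adm x) →
      ∀ Vf : X → ℝ, Measurable Vf → WNorm W Vf < ⊤ →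
        (∀ x, Vf x = C (x, f x) + α * ∫ y, Vf y ∂(Q (x, f x))) →
        ∀ x, vstar x ≤ Vf x) ∧
    (∀ f : X → A, Measurable f → (∀ x, f x ∈ Adm x) →
      ∀ Vf : X → ℝ, Measurable Vf → WNorm W Vf < ⊤ →
        (∀ x, Vf x = C (x, f x) + α * ∫ y, Vf y ∂(Q (x, f x))) →
        (Vf = vstar ↔
          ∀ x, vstar x = C (x, f x) + α * ∫ y, vstar y ∂(Q (x, f x)))) ∧
    ∃ fstar : X → A, Measurable fstar ∧ (∀ x, fstar x ∈ Adm x) ∧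
      ∀ x, vstar x = C (x, fstar x) + α * ∫ y, vstar y ∂(Q (x, fstar x)) := by
  obtain ⟨hle, hiff, hexists⟩ := optimal_selector_characterization_general hAne hα0.le
    (zero_le_one.trans hβ.le) hγ (fun x => one_pos.trans_le (hW1 x)) hQW hAcomp
    (.of_forall_isOpen hAusc) hClsc hQweak hWcont hQWcont hvstarlsc hvstarW hvstarfix
  exact ⟨fun f _ => hle f, fun f _ => hiff f, hexists⟩
end
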